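/- Let a : ℕ → ℝ be a multiplicative function such that ∑_{p ≤ x over primes} a(p)⁴ ∼ α π(x) for some constant α ≥ 2. Then there exists c > 0 such that a(n) = Ω(exp(c log n / log log n)); that is, limsup_{n→∞} |a(n)| / exp(c log n / log log n) > 0. -/

import Mathlib

open Finset Filter Asymptotics
open scoped Nat.Prime

/-!
Replacing `a` by `f = |a| ^ 4`, it suffices to treat a nonnegative multiplicative `f` whose mean
over the primes up to `x` is at least some `β > 1` for infinitely many `x`. If
`f n ≥ n ^ (1 / 4)` for infinitely many `n`, these `n` already work. Otherwise
`f n ≪ n ^ (1 / 4)`, so for `1 < θ < β` the excess `(β - θ) π(x)` of the prime sum is carried by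
at least `x ^ (1 / 2)` primes `p ≤ x` with `f p ≥ θ`. The product `M` of these `T` primes
satisfies `f M ≥ θ ^ T`, while `log M ≤ T log x` and `log log M ≫ log x` give
`log M / log log M ≪ T`.
-/

lemma map_prod_of_pairwise_coprime {M ι : Type*} [CommMonoid M] {a : ℕ → M} (hone : a 1 = 1)
    (hmult : ∀ m n : ℕ, Nat.Coprime m n → a (m * n) = a m * a n) (s : Finset ι) (g : ι → ℕ)
    (hs : (s : Set ι).Pairwise (Function.onFun Nat.Coprime g)) :
    a (∏ i ∈ s, g i) = ∏ i ∈ s, a (g i) := by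
  classical
  induction s using Finset.induction_on with
  | empty => simpa only [prod_empty] using hone
  | insert i s hi ih =>
    rw [coe_insert] at hs
    have hcop : Nat.Coprime (g i) (∏ j ∈ s, g j) := Nat.Coprime.prod_right fun j hj =>
      hs (Set.mem_insert i _) (Set.mem_insert_of_mem i hj) (ne_of_mem_of_not_mem hj hi).symm
    rw [prod_insert hi, prod_insert hi, hmult _ _ hcop, ih (hs.mono (Set.subset_insert i _))]

lemma eventually_mul_le_of_isEquivalent_mul {ι : Type*} {l : Filter ι} {u v : ι → ℝ} {α β : ℝ}
    (huv : u ~[l] fun x => α * v x) (hv : ∀ x, 0 ≤ v x) (hβα : β < α) :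
    ∀ᶠ x in l, β * v x ≤ u x := by
  have hdiff : (u - fun x => α * v x) =o[l] v := huv.isLittleO.of_const_mul_right
  filter_upwards [hdiff.bound (sub_pos.2 hβα)] with x hx
  rw [Pi.sub_apply, Real.norm_of_nonneg (hv x)] at hx
  linarith [neg_le_of_abs_le hx]

lemma sum_le_mul_card_add_mul_card_filter {ι : Type*} (s : Finset ι) (f : ι → ℝ) {θ B : ℝ}
    (hθ : 0 ≤ θ) (hB : ∀ i ∈ s, f i ≤ B) :
    ∑ i ∈ s, f i ≤ θ * #s + B * #{i ∈ s | θ ≤ f i} := by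
  calc ∑ i ∈ s, f i ≤ ∑ i ∈ s, (θ + if θ ≤ f i then B else 0) :=
        sum_le_sum fun i hi => by split_ifs <;> linarith [hB i hi]
    _ = θ * #s + B * #{i ∈ s | θ ≤ f i} := by
        rw [sum_add_distrib, ← sum_filter, sum_const, sum_const, nsmul_eq_mul, nsmul_eq_mul,
          mul_comm θ, mul_comm B]

lemma isBigO_natCast_primeCounting_mul_log :
    (fun n : ℕ => (n : ℝ)) =O[atTop] fun n : ℕ => (π n : ℝ) * Real.log n := by
  have hsucc : (fun n : ℕ => (n : ℝ) + 1) =O[atTop] fun n : ℕ => (n : ℝ) :=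
    (isBigO_refl _ _).add (isLittleO_const_id_atTop (1 : ℝ)).natCast_atTop.isBigO
  have hlog : (fun n : ℕ => Real.log (n + 1)) =o[atTop] fun n : ℕ => (n : ℝ) :=
    (Real.isLittleO_log_id_atTop.comp_tendsto (tendsto_atTop_add_const_right atTop (1 : ℝ)
      tendsto_natCast_atTop_atTop)).trans_isBigO hsucc
  refine IsBigO.of_bound 2 ?_
  filter_upwards [hlog.bound (show (0 : ℝ) < 1 / 10 by norm_num)] with n hn
  rw [Real.norm_natCast] at hn
  have hpsi := (Chebyshev.psi_ge n).trans (Chebyshev.psi_le_primeCounting_mul_log n)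
  calc ‖(n : ℝ)‖ ≤ 2 * (n * Real.log 2 - Real.log (n + 1)) := by
        rw [Real.norm_natCast]
        nlinarith [le_of_abs_le hn, Real.log_two_gt_d9, n.cast_nonneg (α := ℝ)]
    _ ≤ 2 * ‖(π n : ℝ) * Real.log n‖ := by
        gcongr
        exact hpsi.trans (Real.le_norm_self _)

lemma isLittleO_rpow_primeCounting {s : ℝ} (hs : s < 1) :
    (fun n : ℕ => (n : ℝ) ^ s) =o[atTop] fun n : ℕ => (π n : ℝ) := by
  have hlog : (fun n : ℕ => (n : ℝ) ^ s * Real.log n) =o[atTop] fun n : ℕ => (n : ℝ) := by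
    have h := (isLittleO_log_rpow_atTop (sub_pos.2 hs)).natCast_atTop
    refine ((isBigO_refl (fun n : ℕ => (n : ℝ) ^ s) atTop).mul_isLittleO h).congr' .rfl ?_
    filter_upwards [eventually_gt_atTop 0] with n hn
    rw [← Real.rpow_add (mod_cast hn), add_sub_cancel, Real.rpow_one]
  have hlog_ne : ∀ᶠ n : ℕ in atTop, Real.log n ≠ 0 := by
    filter_upwards [eventually_gt_atTop 1] with n hn
    exact (Real.log_pos (mod_cast hn)).ne'
  refine ((hlog.trans_isBigO isBigO_natCast_primeCounting_mul_log).mul_isBigO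
    (isBigO_refl (fun n : ℕ => (Real.log n)⁻¹) atTop)).congr' ?_ ?_ <;>
  · filter_upwards [hlog_ne] with n hn
    exact mul_inv_cancel_right₀ hn _

lemma frequently_rpow_le_card_primesLE_filter {f : ℕ → ℝ} {r s θ β : ℝ} (hr : 0 ≤ r)
    (hrs : s + r < 1) (hθ : 0 ≤ θ) (hθβ : θ < β)
    (hf : f =O[atTop] fun n : ℕ => (n : ℝ) ^ r)
    (hsum : ∃ᶠ x : ℕ in atTop, β * π x ≤ ∑ p ∈ Nat.primesLE x, f p) :
    ∃ᶠ x : ℕ in atTop, (x : ℝ) ^ s ≤ #{p ∈ Nat.primesLE x | θ ≤ f p} := by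
  obtain ⟨C, hC, hfC⟩ := bound_of_isBigO_nat_atTop hf
  have hπ := (isLittleO_rpow_primeCounting hrs).bound (div_pos (sub_pos.2 hθβ) hC)
  refine (hsum.and_eventually (hπ.and (eventually_gt_atTop 0))).mono ?_
  rintro x ⟨hx, hπx, hx0⟩
  have hx0' : (0 : ℝ) < x := mod_cast hx0
  have hbound : ∀ p ∈ Nat.primesLE x, f p ≤ C * (x : ℝ) ^ r := fun p hp => by
    have hp0 : (0 : ℝ) < p := mod_cast (Nat.prime_of_mem_primesLE hp).pos
    have hfp := hfC (Real.rpow_pos_of_pos hp0 r).ne'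
    rw [Real.norm_of_nonneg (Real.rpow_nonneg hp0.le r)] at hfp
    calc f p ≤ C * (p : ℝ) ^ r := (le_abs_self _).trans hfp
      _ ≤ C * (x : ℝ) ^ r := by
        gcongr
        exact Nat.le_of_mem_primesLE hp
  have hmarkov := sum_le_mul_card_add_mul_card_filter _ f hθ hbound
  rw [Nat.primesLE_card_eq_primeCounting] at hmarkov
  have hexcess : (x : ℝ) ^ s * (C * (x : ℝ) ^ r) ≤ (β - θ) * π x := by
    rw [Real.norm_of_nonneg (by positivity), Real.norm_natCast, div_mul_eq_mul_div,
      le_div_iff₀ hC, Real.rpow_add hx0'] at hπx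
    linarith
  refine le_of_mul_le_mul_right ?_ (by positivity : 0 < C * (x : ℝ) ^ r)
  linarith

lemma eventually_exp_mul_log_div_log_log_le_rpow (c : ℝ) {ε : ℝ} (hε : 0 < ε) :
    ∀ᶠ x : ℝ in atTop, Real.exp (c * Real.log x / Real.log (Real.log x)) ≤ x ^ ε := by
  have hloglog := Real.tendsto_log_atTop.comp Real.tendsto_log_atTop
  filter_upwards [hloglog.eventually_ge_atTop (c / ε), hloglog.eventually_gt_atTop 0,
    eventually_ge_atTop 1] with x hcx hpos hx1
  rw [Function.comp_apply] at hcx hpos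
  rw [Real.rpow_def_of_pos (by linarith), Real.exp_le_exp, div_le_iff₀ hpos]
  calc c * Real.log x ≤ (Real.log (Real.log x) * ε) * Real.log x := by
        gcongr
        · exact Real.log_nonneg hx1
        · exact (div_le_iff₀ hε).1 hcx
    _ = Real.log x * ε * Real.log (Real.log x) := by ring

lemma log_prod_div_log_log_prod_le {s : Finset ℕ} (hs : ∀ p ∈ s, 2 ≤ p ∧ p ≤ #s ^ 2)
    (hfour : 4 ≤ #s) :
    Real.log (∏ p ∈ s, p : ℕ) / Real.log (Real.log (∏ p ∈ s, p : ℕ)) ≤ 4 * #s := by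
  have hT : (4 : ℝ) ≤ #s := mod_cast hfour
  have hlow : (2 : ℝ) ^ #s ≤ (∏ p ∈ s, p : ℕ) :=
    mod_cast pow_card_le_prod s (fun p => p) 2 fun p hp => (hs p hp).1
  have hhigh : ((∏ p ∈ s, p : ℕ) : ℝ) ≤ ((#s : ℝ) ^ 2) ^ #s :=
    mod_cast prod_le_pow_card s (fun p => p) _ fun p hp => (hs p hp).2
  set M := ∏ p ∈ s, p
  have hMpos : (0 : ℝ) < M := lt_of_lt_of_le (by positivity) hlow
  have hlogM : Real.log M ≤ #s * (2 * Real.log #s) := by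
    simpa only [Real.log_pow, Nat.cast_ofNat] using Real.log_le_log hMpos hhigh
  have hsqrt : √(#s : ℝ) ≤ Real.log M := by
    have hlogM_ge : #s * Real.log 2 ≤ Real.log M := by
      simpa only [Real.log_pow] using Real.log_le_log (by positivity) hlow
    have hsqrt_two : 2 ≤ √(#s : ℝ) := Real.le_sqrt_of_sq_le (by linarith)
    calc √(#s : ℝ) ≤ √(#s : ℝ) * √(#s : ℝ) / 2 := by nlinarith
      _ = #s / 2 := by rw [Real.mul_self_sqrt (Nat.cast_nonneg _)]
      _ ≤ #s * Real.log 2 := by nlinarith [Real.log_two_gt_d9]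
      _ ≤ Real.log M := hlogM_ge
  have hloglogM : Real.log #s / 2 ≤ Real.log (Real.log M) := by
    rw [← Real.log_sqrt (by positivity)]
    exact Real.log_le_log (by positivity) hsqrt
  have hlogT : 0 < Real.log #s := Real.log_pos (by linarith)
  rw [div_le_iff₀ (by linarith)]
  calc Real.log M ≤ #s * (2 * Real.log #s) := hlogM
    _ = 4 * #s * (Real.log #s / 2) := by ring
    _ ≤ 4 * #s * Real.log (Real.log M) := by gcongr

lemma exp_log_prod_div_log_log_prod_le_map_prod {f : ℕ → ℝ} (hone : f 1 = 1)
    (hmult : ∀ m n : ℕ, Nat.Coprime m n → f (m * n) = f m * f n) {s : Finset ℕ} {θ : ℝ}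
    (hprime : ∀ p ∈ s, p.Prime) (hle : ∀ p ∈ s, p ≤ #s ^ 2) (hfour : 4 ≤ #s) (hθ : 1 ≤ θ)
    (hf : ∀ p ∈ s, θ ≤ f p) :
    Real.exp (Real.log θ / 4 * Real.log (∏ p ∈ s, p : ℕ) /
      Real.log (Real.log (∏ p ∈ s, p : ℕ))) ≤ f (∏ p ∈ s, p) := by
  have hratio := log_prod_div_log_log_prod_le (fun p hp => ⟨(hprime p hp).two_le, hle p hp⟩)
    hfour
  have hcop : (s : Set ℕ).Pairwise (Function.onFun Nat.Coprime id) := fun p hp q hq hpq =>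
    (Nat.coprime_primes (hprime p hp) (hprime q hq)).2 hpq
  calc _ ≤ Real.exp (#s * Real.log θ) := by
        rw [mul_div_assoc, Real.exp_le_exp]
        nlinarith [Real.log_nonneg hθ]
    _ = ∏ _p ∈ s, θ := by rw [Real.exp_nat_mul, Real.exp_log (by linarith), prod_const]
    _ ≤ ∏ p ∈ s, f p := prod_le_prod (fun _ _ => by linarith) hf
    _ = f (∏ p ∈ s, p) := (map_prod_of_pairwise_coprime hone hmult s id hcop).symm

lemma exists_frequently_exp_mul_log_div_log_log_le_of_isBigO_rpow {f : ℕ → ℝ} (hone : f 1 = 1)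
    (hmult : ∀ m n : ℕ, Nat.Coprime m n → f (m * n) = f m * f n) {r β : ℝ} (hr : 0 ≤ r)
    (hr' : r < 1 / 2) (hf : f =O[atTop] fun n : ℕ => (n : ℝ) ^ r) (hβ : 1 < β)
    (hsum : ∃ᶠ x : ℕ in atTop, β * π x ≤ ∑ p ∈ Nat.primesLE x, f p) :
    ∃ c > 0, ∃ᶠ n : ℕ in atTop, Real.exp (c * Real.log n / Real.log (Real.log n)) ≤ f n := by
  obtain ⟨θ, hθ, hθβ⟩ := exists_between hβ
  have hmany := frequently_rpow_le_card_primesLE_filter (s := 1 / 2) hr (by linarith)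
    (by linarith) hθβ hf hsum
  refine ⟨Real.log θ / 4, div_pos (Real.log_pos hθ) four_pos, frequently_atTop.2 fun N => ?_⟩
  obtain ⟨x, hcard, hx⟩ := (hmany.and_eventually (eventually_ge_atTop (max N 4 ^ 2))).exists
  set s := {p ∈ Nat.primesLE x | θ ≤ f p}
  have hprime : ∀ p ∈ s, p.Prime := fun p hp => Nat.prime_of_mem_primesLE (mem_filter.1 hp).1
  have hxs : x ≤ #s ^ 2 := by
    rw [← Real.sqrt_eq_rpow, Real.sqrt_le_left (Nat.cast_nonneg _)] at hcard
    exact_mod_cast hcard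
  have hle : ∀ p ∈ s, p ≤ #s ^ 2 := fun p hp =>
    (Nat.le_of_mem_primesLE (mem_filter.1 hp).1).trans hxs
  have hmax : max N 4 ≤ #s := (Nat.pow_le_pow_iff_left two_ne_zero).1 (hx.trans hxs)
  have hN : N ≤ ∏ p ∈ s, p := calc
    N ≤ #s := (le_max_left _ _).trans hmax
    _ ≤ 2 ^ #s := Nat.lt_two_pow_self.le
    _ ≤ ∏ p ∈ s, p := pow_card_le_prod s (fun p => p) 2 fun p hp => (hprime p hp).two_le
  exact ⟨∏ p ∈ s, p, hN, exp_log_prod_div_log_log_prod_le_map_prod hone hmult hprime hle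
    ((le_max_right _ _).trans hmax) hθ.le fun p hp => (mem_filter.1 hp).2⟩

lemma exists_frequently_exp_mul_log_div_log_log_le_of_nonneg {f : ℕ → ℝ}
    (hnonneg : ∀ n, 0 ≤ f n) (hone : f 1 = 1)
    (hmult : ∀ m n : ℕ, Nat.Coprime m n → f (m * n) = f m * f n) {β : ℝ} (hβ : 1 < β)
    (hsum : ∃ᶠ x : ℕ in atTop, β * π x ≤ ∑ p ∈ Nat.primesLE x, f p) :
    ∃ c > 0, ∃ᶠ n : ℕ in atTop, Real.exp (c * Real.log n / Real.log (Real.log n)) ≤ f n := by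
  by_cases hlarge : ∃ᶠ n : ℕ in atTop, (n : ℝ) ^ (1 / 4 : ℝ) ≤ f n
  · have hexp := (eventually_exp_mul_log_div_log_log_le_rpow 1
      (show (0 : ℝ) < 1 / 4 by norm_num)).natCast_atTop
    exact ⟨1, one_pos, (hlarge.and_eventually hexp).mono fun n hn => hn.2.trans hn.1⟩
  · have hf : f =O[atTop] fun n : ℕ => (n : ℝ) ^ (1 / 4 : ℝ) := by
      refine IsBigO.of_norm_eventuallyLE ?_
      filter_upwards [not_frequently.1 hlarge] with n hn
      rw [Real.norm_of_nonneg (hnonneg n)]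
      exact (not_le.1 hn).le
    exact exists_frequently_exp_mul_log_div_log_log_le_of_isBigO_rpow hone hmult (by norm_num)
      (by norm_num) hf hβ hsum

theorem omega_result_general {𝕜 : Type*} [NormedField 𝕜] {a : ℕ → 𝕜} (hone : a 1 = 1)
    (hmult : ∀ m n : ℕ, Nat.Coprime m n → a (m * n) = a m * a n) {k : ℕ} (hk : k ≠ 0) {β : ℝ}
    (hβ : 1 < β) (hsum : ∃ᶠ x : ℕ in atTop, β * π x ≤ ∑ p ∈ Nat.primesLE x, ‖a p‖ ^ k) :
    ∃ c > 0, ∃ᶠ n : ℕ in atTop, Real.exp (c * Real.log n / Real.log (Real.log n)) ≤ ‖a n‖ := by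
  obtain ⟨c, hc, hfreq⟩ := exists_frequently_exp_mul_log_div_log_log_le_of_nonneg
    (f := fun n => ‖a n‖ ^ k)
    (fun n => by positivity) (by simp only [hone, norm_one, one_pow])
    (fun m n hmn => by simp only [hmult m n hmn, norm_mul, mul_pow]) hβ hsum
  have hk' : (0 : ℝ) < k := mod_cast hk.bot_lt
  refine ⟨c / k, div_pos hc hk', hfreq.mono fun n hn => ?_⟩
  refine le_of_pow_le_pow_left₀ hk (norm_nonneg _) (le_of_eq_of_le ?_ hn)
  rw [← Real.exp_nat_mul]
  congr 1
  field_simp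

/-- If `a : ℕ → ℝ` is multiplicative (`a(1) = 1`, `a(mn) = a(m)a(n)` for coprime
`m, n`) and `∑_{p ≤ x} a(p)⁴ ∼ α π(x)` for some `α ≥ 2`, then there is `c > 0` with
`a(n) = Ω(exp(c log n / log log n))`. -/
theorem omega_result (a : ℕ → ℝ) (α : ℝ) (hα : 2 ≤ α)
    (hone : a 1 = 1)
    (hmult : ∀ m n : ℕ, Nat.Coprime m n → a (m * n) = a m * a n)
    (h4 : (fun x : ℕ => ∑ p ∈ (Finset.range (x + 1)).filter Nat.Prime, (a p) ^ 4)
        ~[atTop] fun x : ℕ => α * (((Finset.range (x + 1)).filter Nat.Prime).card : ℝ)) :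
    ∃ c > 0, ∃ A > 0, ∀ N : ℕ, ∃ n ≥ N,
      A * Real.exp (c * Real.log n / Real.log (Real.log n)) ≤ |a n| := by
  have hsum : ∀ᶠ x : ℕ in atTop, 3 / 2 * (π x : ℝ) ≤ ∑ p ∈ Nat.primesLE x, ‖a p‖ ^ 4 := by
    simpa only [← Nat.primesLE_eq_filter_range, Nat.primesLE_card_eq_primeCounting,
      Real.norm_eq_abs, Even.pow_abs (show Even 4 by decide)] using
      eventually_mul_le_of_isEquivalent_mul h4 (fun _ => Nat.cast_nonneg _) (by linarith)
  obtain ⟨c, hc, hfreq⟩ :=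
    omega_result_general hone hmult four_ne_zero (by norm_num) hsum.frequently
  exact ⟨c, hc, 1, one_pos, by
    simpa only [one_mul, Real.norm_eq_abs] using frequently_atTop.1 hfreq⟩
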